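/- Let α > 0 and let a : ℤ³ → ℂ be such that the family k ↦ (1+α²‖k‖²)²‖a k‖² is summable. Then ∑_{k∈ℤ³} (D̂_N(α,‖k‖²) − (1+α²‖k‖²))² ‖a k‖² tends to 0 as N → ∞, where D̂_N(α,s) := ∑_{n=0}^{N} (α²s/(1+α²s))ⁿ. (This expresses that D_N(ω) → Aω in L² as N → ∞, for every ω in the Sobolev space H², where A = I − α²Δ.) -/

import Mathlib

open Filter Topology

/-- The Van Cittert deconvolution symbol `D̂_N(α,s) = ∑_{n=0}^N (α²s/(1+α²s))ⁿ`. -/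
noncomputable def deconvSymbol (α s : ℝ) (N : ℕ) : ℝ :=
  ∑ n ∈ Finset.range (N + 1), (α ^ 2 * s / (1 + α ^ 2 * s)) ^ n

/-- The squared Euclidean norm `|k|²` of a Fourier mode `k ∈ ℤ³`. -/
def sqNorm3 (k : Fin 3 → ℤ) : ℝ := ∑ i, ((k i : ℝ)) ^ 2

theorem deconvSymbol_sub (α s : ℝ) (hs : 0 ≤ s) (N : ℕ) :
    deconvSymbol α s N - (1 + α ^ 2 * s)
      = -((1 + α ^ 2 * s) * (α ^ 2 * s / (1 + α ^ 2 * s)) ^ (N + 1)) := by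
  have h : (1 + α ^ 2 * s) ≠ 0 := by positivity
  unfold deconvSymbol
  have hg := mul_neg_geom_sum (α ^ 2 * s / (1 + α ^ 2 * s)) (N + 1)
  have h1 : 1 - α ^ 2 * s / (1 + α ^ 2 * s) = (1 + α ^ 2 * s)⁻¹ := by
    field_simp
    ring
  rw [h1, inv_mul_eq_iff_eq_mul₀ h] at hg
  rw [hg]
  ring

/-- Symbol-level statement that `D_N(ω) → Aω` in `L²` as `N → ∞` for `ω ∈ H²`,
where `A = I - α²Δ`. -/
theorem deconv_tendsto_A_L2 (α : ℝ) (hα : 0 < α) (a : (Fin 3 → ℤ) → ℂ)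
    (hsum : Summable fun k => (1 + α ^ 2 * sqNorm3 k) ^ 2 * ‖a k‖ ^ 2) :
    Tendsto
      (fun N : ℕ => ∑' k : Fin 3 → ℤ,
        (deconvSymbol α (sqNorm3 k) N - (1 + α ^ 2 * sqNorm3 k)) ^ 2 * ‖a k‖ ^ 2)
      atTop (𝓝 0) := by
  have hs : ∀ k, 0 ≤ sqNorm3 k := fun k => Finset.sum_nonneg fun i _ => sq_nonneg _
  have h0 : ∀ k, 0 ≤ α ^ 2 * sqNorm3 k / (1 + α ^ 2 * sqNorm3 k) := fun k => by
    have := hs k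
    positivity
  have h1 : ∀ k, α ^ 2 * sqNorm3 k / (1 + α ^ 2 * sqNorm3 k) < 1 := fun k => by
    have := hs k
    rw [div_lt_one (by positivity)]
    linarith
  have key := tendsto_tsum_of_dominated_convergence (𝓕 := (atTop : Filter ℕ))
    (f := fun (N : ℕ) (k : Fin 3 → ℤ) =>
      (deconvSymbol α (sqNorm3 k) N - (1 + α ^ 2 * sqNorm3 k)) ^ 2 * ‖a k‖ ^ 2)
    (g := fun _ => (0 : ℝ)) hsum ?_ ?_
  · simpa using key
  · intro k
    have ht := (tendsto_pow_atTop_nhds_zero_of_lt_one (h0 k) (h1 k)).comp (tendsto_add_atTop_nat 1)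
    have ht2 := (((ht.const_mul (1 + α ^ 2 * sqNorm3 k)).neg).pow 2).mul_const (‖a k‖ ^ 2)
    simp only [deconvSymbol_sub α _ (hs k)]
    simpa using ht2
  · refine Eventually.of_forall fun N k => ?_
    rw [Real.norm_of_nonneg (by positivity), deconvSymbol_sub α _ (hs k), neg_sq, mul_pow]
    refine mul_le_mul_of_nonneg_right ?_ (sq_nonneg _)
    refine mul_le_of_le_one_right (sq_nonneg _) ?_
    exact pow_le_one₀ (pow_nonneg (h0 k) _) (pow_le_one₀ (h0 k) (h1 k).le)
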